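/- Let G be a finite group having a Sylow p-subgroup which acts nontrivially on a connected finite poset 𝒫, where p = char k ≥ 5, and suppose 𝒫 is a directed tree (its Hasse diagram is a tree). Then the transporter category 𝒯 = G ∝ 𝒫 is of infinite representation type. -/

import Mathlib

set_option maxHeartbeats 1000000
set_option linter.unusedSectionVars false
set_option linter.unusedVariables false

noncomputable section
open Finset
open scoped Classical


section CoreSGA

variable {k : Type} [CommRing k] {Λ : Type} [Ring Λ] [Algebra k Λ]
variable {G : Type} [Group G] [Fintype G]

/-- The skew group algebra `Λ ⊗_k kG` (as functions `G → Λ`), with multiplication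
`(λ ⊗ g) ⬝ (μ ⊗ h) = λ · g(μ) ⊗ gh`. -/
structure SGA (σ : G →* (Λ ≃ₐ[k] Λ)) : Type where
  toFun : G → Λ

namespace SGA

variable {σ : G →* (Λ ≃ₐ[k] Λ)}

@[simp] lemma mk_toFun (f : G → Λ) : (SGA.mk f : SGA σ).toFun = f := rfl

@[ext] lemma ext {f h : SGA σ} (w : ∀ g, f.toFun g = h.toFun g) : f = h := by
  cases f; cases h; simp only [mk.injEq]; funext g; exact w g

/-- The underlying-function equivalence. -/
def equivFun : SGA σ ≃ (G → Λ) := ⟨toFun, mk, fun _ => rfl, fun _ => rfl⟩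

instance : AddCommGroup (SGA σ) := (equivFun (σ := σ)).addCommGroup

@[simp] lemma toFun_add (f h : SGA σ) (g : G) : (f + h).toFun g = f.toFun g + h.toFun g := rfl
@[simp] lemma toFun_zero (g : G) : (0 : SGA σ).toFun g = 0 := rfl
@[simp] lemma toFun_neg (f : SGA σ) (g : G) : (-f).toFun g = -(f.toFun g) := rfl

instance : Mul (SGA σ) :=
  ⟨fun f h => ⟨fun x => ∑ g : G, f.toFun g * σ g (h.toFun (g⁻¹ * x))⟩⟩

instance : One (SGA σ) := ⟨⟨fun x => if x = 1 then 1 else 0⟩⟩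

@[simp] lemma toFun_mul (f h : SGA σ) (x : G) :
    (f * h).toFun x = ∑ g : G, f.toFun g * σ g (h.toFun (g⁻¹ * x)) := rfl

lemma toFun_one (x : G) : (1 : SGA σ).toFun x = if x = 1 then 1 else 0 := rfl

protected lemma one_mul (f : SGA σ) : 1 * f = f := by
  ext x
  rw [toFun_mul]
  rw [Finset.sum_eq_single (1 : G)]
  · simp [toFun_one]
  · intro b _ hb
    simp [toFun_one, hb]
  · simp

protected lemma mul_one (f : SGA σ) : f * 1 = f := by
  ext x
  rw [toFun_mul]
  rw [Finset.sum_eq_single (x : G)]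
  · simp [toFun_one]
  · intro b _ hb
    have : b⁻¹ * x ≠ 1 := by
      intro hc
      rw [inv_mul_eq_one] at hc
      exact hb hc
    simp [toFun_one, this]
  · simp

protected lemma mul_assoc (f h e : SGA σ) : f * h * e = f * (h * e) := by
  ext x
  rw [toFun_mul, toFun_mul]
  simp only [toFun_mul, Finset.sum_mul, map_sum, Finset.mul_sum, map_mul]
  rw [Finset.sum_comm]
  refine Finset.sum_congr rfl fun u _ => ?_
  rw [← Fintype.sum_equiv (Equiv.mulLeft u)
    (fun v => f.toFun u * σ u (h.toFun v) * σ (u * v) (e.toFun ((u * v)⁻¹ * x)))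
    (fun g => f.toFun u * σ u (h.toFun (u⁻¹ * g)) * σ g (e.toFun (g⁻¹ * x)))
    (fun v => by simp [Equiv.mulLeft])]
  refine Finset.sum_congr rfl fun v _ => ?_
  have h3 : (u * v)⁻¹ * x = v⁻¹ * (u⁻¹ * x) := by group
  have h4 : σ u (σ v (e.toFun (v⁻¹ * (u⁻¹ * x)))) = σ (u * v) (e.toFun (v⁻¹ * (u⁻¹ * x))) := by
    rw [map_mul σ]; rfl
  rw [h3, ← h4, mul_assoc]

protected lemma left_distrib (f h e : SGA σ) : f * (h + e) = f * h + f * e := by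
  ext x
  simp [mul_add, Finset.sum_add_distrib]

protected lemma right_distrib (f h e : SGA σ) : (f + h) * e = f * e + h * e := by
  ext x
  simp [add_mul, Finset.sum_add_distrib]

protected lemma zero_mul (f : SGA σ) : 0 * f = 0 := by
  ext x; simp

protected lemma mul_zero (f : SGA σ) : f * 0 = 0 := by
  ext x; simp

instance instRing : Ring (SGA σ) :=
  { (inferInstance : AddCommGroup (SGA σ)),
    (inferInstance : Mul (SGA σ)), (inferInstance : One (SGA σ)) with
    mul_assoc := SGA.mul_assoc
    one_mul := SGA.one_mul
    mul_one := SGA.mul_one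
    left_distrib := SGA.left_distrib
    right_distrib := SGA.right_distrib
    zero_mul := SGA.zero_mul
    mul_zero := SGA.mul_zero }

/-- The canonical inclusion `Λ → ΛG`, `λ ↦ λ ⊗ 1`. -/
def emb (σ : G →* (Λ ≃ₐ[k] Λ)) : Λ →+* SGA σ where
  toFun a := ⟨fun x => if x = 1 then a else 0⟩
  map_one' := rfl
  map_zero' := by ext x; simp
  map_add' a b := by ext x; by_cases hx : x = 1 <;> simp [hx]
  map_mul' a b := by
    ext x
    rw [toFun_mul]
    rw [Finset.sum_eq_single (1 : G)]
    · by_cases hx : x = 1 <;> simp [hx]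
    · intro b' _ hb'; simp [hb']
    · simp

end SGA

end CoreSGA

section GeneralDefs

/-- An idempotent `e` is primitive if it is nonzero and cannot be written as a sum of two
nonzero orthogonal idempotents. -/
def IsPrimitiveIdempotent (A : Type) [Ring A] (e : A) : Prop :=
  IsIdempotentElem e ∧ e ≠ 0 ∧
    ∀ f g : A, IsIdempotentElem f → IsIdempotentElem g → f * g = 0 → g * f = 0 →
      e = f + g → f = 0 ∨ g = 0

/-- A finite family `e : Fin n → A` is a complete set of primitive orthogonal idempotents. -/
def IsCompletePrimitiveOrthogonalSystem (A : Type) [Ring A] {n : ℕ} (e : Fin n → A) : Prop :=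
  (∀ i, IsPrimitiveIdempotent A (e i)) ∧
    (∀ i j, i ≠ j → e i * e j = 0) ∧ (∑ i, e i = 1)

/-- A ring is connected (indecomposable as an algebra) if its only central idempotents
are `0` and `1`. -/
def IsConnectedRing (A : Type) [Ring A] : Prop :=
  Nontrivial A ∧ ∀ e : A, IsIdempotentElem e → (∀ x : A, e * x = x * e) → e = 0 ∨ e = 1

/-- A ring is basic if it admits a complete set of primitive orthogonal idempotents `e i`
such that the indecomposable projective left modules `A e i` are pairwise nonisomorphic. -/
def IsBasicRing (A : Type) [Ring A] : Prop :=
  ∃ (n : ℕ) (e : Fin n → A), IsCompletePrimitiveOrthogonalSystem A e ∧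
    ∀ i j, i ≠ j →
      IsEmpty ((Submodule.span A {e i} : Submodule A A) ≃ₗ[A] (Submodule.span A {e j} : Submodule A A))

/-- `projDimLE A n M` : the `A`-module `M` admits a projective resolution of length at
most `n`, i.e. has projective dimension `≤ n`. -/
def projDimLE (A : Type) [Ring A] (n : ℕ) (M : Type) [AddCommGroup M] [Module A M] : Prop :=
  ∃ (P : ℕ → ModuleCat.{0} A) (d : (i : ℕ) → (P (i + 1) →ₗ[A] P i)) (ε : P 0 →ₗ[A] M),
    (∀ i, Module.Projective A (P i)) ∧
    Function.Surjective ε ∧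
    LinearMap.range (d 0) = LinearMap.ker ε ∧
    (∀ i, LinearMap.range (d (i + 1)) = LinearMap.ker (d i)) ∧
    (∀ i, n < i → ∀ x : P i, x = 0)

/-- The (little) global dimension of a ring, as an element of `ℕ∞`: the least `n` such that
every finitely generated `A`-module has projective dimension at most `n` (and `⊤` if there
is no such `n`). -/
noncomputable def globalDim (A : Type) [Ring A] : ℕ∞ :=
  sInf {c : ℕ∞ | ∃ n : ℕ, c = (n : ℕ∞) ∧
    ∀ (M : Type) [AddCommGroup M] [Module A M], Module.Finite A M → projDimLE A n M}

/-- A module is indecomposable if it is nonzero and is not the internal direct sum of two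
nonzero submodules. -/
def IsIndecomposableModule (A : Type) [Ring A] (M : Type) [AddCommGroup M] [Module A M] : Prop :=
  Nontrivial M ∧ ∀ N₁ N₂ : Submodule A M, IsCompl N₁ N₂ → N₁ = ⊥ ∨ N₂ = ⊥

/-- A ring has finite representation type if there are only finitely many isomorphism classes
of finitely generated indecomposable left modules. -/
def FiniteRepType (A : Type) [Ring A] : Prop :=
  ∃ S : Set (Σ m : ℕ, Submodule A (Fin m → A)), S.Finite ∧
    ∀ (M : Type) [AddCommGroup M] [Module A M], Module.Finite A M →
      IsIndecomposableModule A M →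
        ∃ p ∈ S, Nonempty (M ≃ₗ[A] ((Fin p.1 → A) ⧸ p.2))

/-- Two rings are Morita equivalent if their categories of modules are equivalent. -/
def MoritaEquivalent (A B : Type) [Ring A] [Ring B] : Prop :=
  Nonempty (ModuleCat.{0} A ≌ ModuleCat.{0} B)

/-- An Auslander algebra: global dimension at most `2`, and there is an exact sequence
`0 → A → I₀ → I₁` with `I₀`, `I₁` both projective and injective (equivalently, in a minimal
injective resolution `0 → A → I₀ → I₁ → I₂ → 0` the terms `I₀` and `I₁` are projective). -/
def IsAuslanderAlgebra (A : Type) [Ring A] : Prop :=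
  globalDim A ≤ 2 ∧
    ∃ (I₀ I₁ : ModuleCat.{0} A) (f : A →ₗ[A] I₀) (g : I₀ →ₗ[A] I₁),
      Module.Injective A I₀ ∧ Module.Projective A I₀ ∧
      Module.Injective A I₁ ∧ Module.Projective A I₁ ∧
      Function.Injective f ∧ LinearMap.ker g = LinearMap.range f

/-- The `i`-th power of a left ideal (with `I ^ 0 = ⊤`). -/
def leftIdealPow (A : Type) [Ring A] (I : Submodule A A) : ℕ → Submodule A A
  | 0 => ⊤
  | n + 1 => Submodule.span A {x : A | ∃ a ∈ I, ∃ b ∈ leftIdealPow A I n, x = a * b}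

end GeneralDefs
section IncidenceAlgebra

variable (k : Type) [CommRing k] (P : Type) [Fintype P] [PartialOrder P] [DecidableEq P]

/-- The incidence algebra of a finite poset `P` over `k`, realized as the subalgebra of
`P × P`-matrices supported on pairs `x ≤ y`. -/
def IncidenceAlg : Subalgebra k (Matrix P P k) where
  carrier := {M : Matrix P P k | ∀ x y : P, ¬ x ≤ y → M x y = 0}
  mul_mem' := fun {M N} hM hN => by
    intro x y hxy
    rw [Matrix.mul_apply]
    refine Finset.sum_eq_zero fun z _ => ?_
    by_cases hxz : x ≤ z
    · have hzy : ¬ z ≤ y := fun h => hxy (le_trans hxz h)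
      rw [hN z y hzy, mul_zero]
    · rw [hM x z hxz, zero_mul]
  one_mem' := fun x y hxy =>
    Matrix.one_apply_ne (fun h => hxy (le_of_eq h))
  add_mem' := fun {M N} hM hN x y hxy => by
    show M x y + N x y = 0
    rw [hM x y hxy, hN x y hxy, add_zero]
  zero_mem' := fun x y _ => rfl
  algebraMap_mem' := fun c x y hxy => by
    rw [Matrix.algebraMap_matrix_apply, if_neg (fun h => hxy (le_of_eq h))]

variable {k P}

/-- The algebra automorphism of the incidence algebra induced by an order automorphism
of the poset. -/
def incAut (e : P ≃o P) : (IncidenceAlg k P) ≃ₐ[k] (IncidenceAlg k P) where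
  toFun M := ⟨fun x y => (M : Matrix P P k) (e.symm x) (e.symm y),
    fun x y hxy => M.2 _ _ (fun h => hxy (e.symm.le_iff_le.mp h))⟩
  invFun M := ⟨fun x y => (M : Matrix P P k) (e x) (e y),
    fun x y hxy => M.2 _ _ (fun h => hxy (e.le_iff_le.mp h))⟩
  left_inv M := Subtype.ext (by funext x y; simp)
  right_inv M := Subtype.ext (by funext x y; simp)
  map_add' M N := Subtype.ext (by funext x y; rfl)
  map_mul' M N := Subtype.ext (by
    funext x y
    simp only [MulMemClass.coe_mul]
    rw [Matrix.mul_apply]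
    exact (Equiv.sum_comp (e.symm.toEquiv)
      (fun z => (M : Matrix P P k) (e.symm x) z * (N : Matrix P P k) z (e.symm y))).symm)
  commutes' c := Subtype.ext (by
    funext x y
    show algebraMap k (Matrix P P k) c (e.symm x) (e.symm y)
      = algebraMap k (Matrix P P k) c x y
    rw [Matrix.algebraMap_matrix_apply, Matrix.algebraMap_matrix_apply]
    by_cases h : x = y
    · subst h; simp
    · rw [if_neg (fun hc => h (e.symm.injective hc)), if_neg h])

/-- The action of a group of order automorphisms of `P` on the incidence algebra. -/
def incRep {G : Type} [Group G] (ρ : G →* (P ≃o P)) :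
    G →* ((IncidenceAlg k P) ≃ₐ[k] (IncidenceAlg k P)) :=
  MonoidHom.mk' (fun g => incAut (ρ g)) (by
    intro g h
    apply AlgEquiv.ext
    intro M
    apply Subtype.ext
    funext x y
    show (M : Matrix P P k) ((ρ (g * h)).symm x) ((ρ (g * h)).symm y) = _
    rw [map_mul ρ]
    rfl)

/-- A poset is connected if any two elements are linked by a chain of comparabilities. -/
def PosetConnected (P : Type) [PartialOrder P] : Prop :=
  ∀ x y : P, Relation.ReflTransGen (fun a b : P => a ≤ b ∨ b ≤ a) x y

end IncidenceAlgebra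
section AbstractPart

variable {k : Type} [Field k] {A B V : Type} [Ring A] [Algebra k A] [Ring B] [Algebra k B]
  [AddCommGroup V] [Module k V]

/-- The coinduced module, as a subspace of the linear maps `A → V`. -/
def coindSub (ι : B →ₐ[k] A) (R : B →ₐ[k] Module.End k V) : Submodule k (A →ₗ[k] V) where
  carrier := {f | ∀ b a, f (ι b * a) = R b (f a)}
  add_mem' := by
    intro f g hf hg b a
    simp [hf b a, hg b a]
  zero_mem' := by intro b a; simp
  smul_mem' := by
    intro c f hf b a
    simp [hf b a]

/-- The coinduced module. -/
def Coind (ι : B →ₐ[k] A) (R : B →ₐ[k] Module.End k V) : Type := ↥(coindSub ι R)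

variable (ι : B →ₐ[k] A) (R : B →ₐ[k] Module.End k V)

instance : AddCommGroup (Coind ι R) := inferInstanceAs (AddCommGroup ↥(coindSub ι R))
instance : Module k (Coind ι R) := inferInstanceAs (Module k ↥(coindSub ι R))

lemma coind_ext {f g : Coind ι R} (h : ∀ a, f.1 a = g.1 a) : f = g :=
  Subtype.ext (LinearMap.ext h)

instance : SMul A (Coind ι R) :=
  ⟨fun a f => ⟨f.1 ∘ₗ LinearMap.mulRight k a, by
    intro b x
    have := f.2 b (x * a)
    simpa [mul_assoc] using this⟩⟩

lemma coind_smul (a : A) (f : Coind ι R) (x : A) : (a • f).1 x = f.1 (x * a) := rfl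
lemma coind_add (f g : Coind ι R) (x : A) : (f + g).1 x = f.1 x + g.1 x := rfl
lemma coind_zero (x : A) : (0 : Coind ι R).1 x = 0 := rfl
lemma coind_ksmul (c : k) (f : Coind ι R) (x : A) : (c • f).1 x = c • f.1 x := rfl

instance : Module A (Coind ι R) where
  one_smul f := by apply coind_ext; intro x; simp [coind_smul]
  mul_smul a b f := by apply coind_ext; intro x; simp [coind_smul, mul_assoc]
  smul_zero a := by apply coind_ext; intro x; simp [coind_smul, coind_zero]
  smul_add a f g := by apply coind_ext; intro x; simp [coind_smul, coind_add]
  add_smul a b f := by apply coind_ext; intro x; simp [coind_smul, coind_add, mul_add]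
  zero_smul f := by apply coind_ext; intro x; simp [coind_smul, coind_zero]

instance : IsScalarTower k A (Coind ι R) where
  smul_assoc c a f := by apply coind_ext; intro x; simp [coind_smul, coind_ksmul]

/-- `V`, with the `B`-action `R`, is a retract of the restriction of the `A`-module `X`. -/
def Retr (X : Type) [AddCommGroup X] [Module A X] [Module k X] : Prop :=
  ∃ (s : V →ₗ[k] X) (r : X →ₗ[k] V), (∀ b v, s (R b v) = ι b • s v) ∧
    (∀ b x, r (ι b • x) = R b (r x)) ∧ ∀ v, r (s v) = v

lemma retr_coind (π : A →ₗ[k] B) (h1 : ∀ b a, π (ι b * a) = b * π a)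
    (h2 : ∀ b a, π (a * ι b) = π a * b) (h3 : π 1 = 1) : Retr ι R (Coind ι R) := by
  refine ⟨⟨⟨fun v => ⟨⟨⟨fun a => R (π a) v, ?_⟩, ?_⟩, ?_⟩, ?_⟩, ?_⟩,
    ⟨⟨fun f => f.1 1, ?_⟩, ?_⟩, ?_, ?_, ?_⟩
  · intro a b; simp
  · intro c a; simp
  · intro b a; simp [h1]
  · intro v w; apply coind_ext; intro x; exact map_add (R (π x)) v w
  · intro c v; apply coind_ext; intro x; exact map_smul (R (π x)) c v
  · intro f g; rfl
  · intro c f; rfl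
  · intro b v
    apply coind_ext; intro x
    change R (π x) (R b v) = R (π (x * ι b)) v
    rw [h2, map_mul]; rfl
  · intro b f
    change f.1 (1 * ι b) = R b (f.1 1)
    simpa using f.2 b 1
  · intro v
    change R (π 1) v = v
    rw [h3, map_one]; rfl

lemma retr_equiv {X Y : Type} [AddCommGroup X] [Module A X] [Module k X] [IsScalarTower k A X]
    [AddCommGroup Y] [Module A Y] [Module k Y] [IsScalarTower k A Y] (e : X ≃ₗ[A] Y)
    (h : Retr ι R X) : Retr ι R Y := by
  obtain ⟨s, r, hs, hr, hrs⟩ := h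
  refine ⟨(e.toLinearMap.restrictScalars k) ∘ₗ s, r ∘ₗ (e.symm.toLinearMap.restrictScalars k),
    ?_, ?_, ?_⟩
  · intro b v; simp [hs]
  · intro b v; simp [hr]
  · intro v; simp [hrs]

lemma retr_of_idem {Y X : Type} [AddCommGroup Y] [Module A Y] [Module k Y] [IsScalarTower k A Y]
    [AddCommGroup X] [Module A X] [Module k X] [IsScalarTower k A X]
    (s : V →ₗ[k] Y) (r : Y →ₗ[k] V) (hs : ∀ b v, s (R b v) = ι b • s v)
    (hr : ∀ b x, r (ι b • x) = R b (r x)) (i : X →ₗ[A] Y) (q : Y →ₗ[A] X) (c : k) (hc : c ≠ 0)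
    (h : ∀ v, r (i (q (s v))) = c • v) : Retr ι R X := by
  refine ⟨(q.restrictScalars k) ∘ₗ s, c⁻¹ • (r ∘ₗ (i.restrictScalars k)), ?_, ?_, ?_⟩
  · intro b v; simp [hs]
  · intro b v; simp [hr]
  · intro v; simp [h, smul_smul, hc]

lemma retr_induct [Nontrivial V]
    (hend : ∀ T : V →ₗ[k] V, (∀ b v, T (R b v) = R b (T v)) → ∃ c : k, ∀ v, T v = c • v)
    [Module.Finite k A]
    (S : Set (Σ m : ℕ, Submodule A (Fin m → A)))
    (hS : ∀ (M : Type) [AddCommGroup M] [Module A M], Module.Finite A M →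
      IsIndecomposableModule A M → ∃ p ∈ S, Nonempty (M ≃ₗ[A] ((Fin p.1 → A) ⧸ p.2))) (n : ℕ) :
    ∀ (Y : Type) [AddCommGroup Y] [Module A Y] [Module k Y] [IsScalarTower k A Y],
      Module.Finite k Y → Module.finrank k Y < n → Retr ι R Y →
        ∃ p ∈ S, Retr ι R ((Fin p.1 → A) ⧸ p.2) := by
  induction n with
  | zero => intro Y _ _ _ _ _ h; omega
  | succ n ih =>
    intro Y _ _ _ _ hfin hlt hret
    by_cases hind : IsIndecomposableModule A Y
    · have : Module.Finite A Y := Module.Finite.of_restrictScalars_finite k A Y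
      obtain ⟨q, hq, ⟨e⟩⟩ := hS Y this hind
      exact ⟨q, hq, retr_equiv ι R e hret⟩
    · obtain ⟨s, r, hs, hr, hrs⟩ := hret
      have hnt : Nontrivial Y := by
        obtain ⟨v, hv⟩ := exists_ne (0 : V)
        refine ⟨s v, 0, fun h => hv ?_⟩
        rw [← hrs v, h, map_zero]
      simp only [IsIndecomposableModule, not_and, not_forall, not_or] at hind
      obtain ⟨N₁, N₂, hc, hn1, hn2⟩ := hind hnt
      have key : ∀ N N' : Submodule A Y, IsCompl N N' → N' ≠ ⊥ → Retr ι R N →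
          ∃ p ∈ S, Retr ι R ((Fin p.1 → A) ⧸ p.2) := by
        intro N N' hc hne hret
        refine ih N (Module.Finite.of_injective (N.subtype.restrictScalars k)
          N.subtype_injective) ?_ hret
        have hlt' : Module.finrank k (N.restrictScalars k) < Module.finrank k Y := by
          apply Submodule.finrank_lt
          rw [Ne, Submodule.restrictScalars_eq_top_iff]
          rintro rfl
          exact hne (by simpa using hc.inf_eq_bot)
        have : Module.finrank k (N.restrictScalars k) = Module.finrank k N := rfl
        omega
      have sc : ∀ N N' : Submodule A Y, ∀ hc : IsCompl N N', ∃ c : k, ∀ v,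
          r (N.subtype (N.projectionOnto N' hc (s v))) = c • v := by
        intro N N' hc
        apply hend (r ∘ₗ (N.subtype.restrictScalars k) ∘ₗ
          ((N.projectionOnto N' hc).restrictScalars k) ∘ₗ s)
        intro b v
        simp [hs, hr]
      obtain ⟨c₁, h₁⟩ := sc N₁ N₂ hc
      obtain ⟨c₂, h₂⟩ := sc N₂ N₁ hc.symm
      by_cases hz : c₁ = 0
      · have hz2 : c₂ ≠ 0 := by
          intro hz2
          obtain ⟨v, hv⟩ := exists_ne (0 : V)
          apply hv
          rw [← hrs v]
          have : s v = N₁.subtype (N₁.projectionOnto N₂ hc (s v)) +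
            N₂.subtype (N₂.projectionOnto N₁ hc.symm (s v)) :=
            (Submodule.projection_add_projection_eq_self hc (s v)).symm
          rw [this, map_add, h₁, h₂, hz, hz2]; simp
        exact key N₂ N₁ hc.symm hn1 (retr_of_idem ι R s r hs hr _ _ c₂ hz2 h₂)
      · exact key N₁ N₂ hc hn2 (retr_of_idem ι R s r hs hr _ _ c₁ hz h₁)

theorem not_finiteRepType_of_family [Nontrivial V] [Module.Finite k V] [Module.Finite k A]
    (ι : B →ₐ[k] A) (π : A →ₗ[k] B) (h1 : ∀ b a, π (ι b * a) = b * π a)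
    (h2 : ∀ b a, π (a * ι b) = π a * b) (h3 : π 1 = 1)
    (I : Type) [Infinite I] (R : I → (B →ₐ[k] Module.End k V))
    (hend : ∀ i, ∀ T : V →ₗ[k] V, (∀ b v, T (R i b v) = R i b (T v)) → ∃ c : k, ∀ v, T v = c • v)
    (hhom : ∀ i j, i ≠ j → ∀ T : V →ₗ[k] V, (∀ b v, T (R i b v) = R j b (T v)) → ∀ v, T v = 0) :
    ¬ FiniteRepType A := by
  rintro ⟨S, hSf, hS⟩
  have H : ∀ i, ∃ q : S, Retr ι (R i) ((Fin q.1.1 → A) ⧸ q.1.2) := by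
    intro i
    have hfin : Module.Finite k (Coind ι (R i)) :=
      Module.Finite.of_injective (coindSub ι (R i)).subtype (Submodule.subtype_injective _)
    obtain ⟨q, hq, hr⟩ := retr_induct ι (R i) (hend i) S hS _ (Coind ι (R i)) hfin
      (Nat.lt_succ_self _) (retr_coind ι (R i) π h1 h2 h3)
    exact ⟨⟨q, hq⟩, hr⟩
  choose f hf using H
  have : Finite S := hSf
  obtain ⟨q, hq⟩ := Finite.exists_infinite_fiber f
  have H2 : ∀ i : (f ⁻¹' {q} : Set I), Retr ι (R i.1) ((Fin q.1.1 → A) ⧸ q.1.2) := by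
    rintro ⟨i, hi⟩
    have hi' : f i = q := hi
    subst hi'
    exact hf i
  choose s r hs hr hrs using H2
  obtain ⟨v, hv⟩ := exists_ne (0 : V)
  have hli : LinearIndependent k (fun i => s i v) := by
    rw [linearIndependent_iff']
    intro t g hg j hj
    have h0 := congrArg (r j) hg
    rw [map_sum, map_zero, Finset.sum_eq_single j] at h0
    · rw [map_smul, hrs] at h0
      exact (smul_eq_zero.mp h0).resolve_right hv
    · intro i _ hij
      rw [map_smul]
      have := hhom i.1 j.1 (fun h => hij (Subtype.ext h)) (r j ∘ₗ s i) (by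
        intro b w; simp [hs, hr]) v
      simp only [LinearMap.comp_apply] at this
      rw [this, smul_zero]
    · intro h; exact absurd hj h
  have := hli.finite_of_isNoetherian
  exact not_finite (f ⁻¹' {q} : Set I)

end AbstractPart

section StarPart

variable {k : Type} [Field k]

/-- Star representation: four lines in the plane. -/
def starMat (l d : k) (e c : Fin 4 → k) : Matrix (Fin 6) (Fin 6) k :=
  !![d, 0, c 0, 0, c 2, c 3;
     0, d, 0, c 1, c 2, l * c 3;
     0, 0, e 0, 0, 0, 0;
     0, 0, 0, e 1, 0, 0;
     0, 0, 0, 0, e 2, 0;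
     0, 0, 0, 0, 0, e 3]

lemma starMat_mul (l d d' : k) (e e' c c' : Fin 4 → k) :
    starMat l d e c * starMat l d' e' c' =
      starMat l (d * d') (fun i => e i * e' i) (fun i => d * c' i + c i * e' i) := by
  ext i j
  fin_cases i <;> fin_cases j <;>
    simp [starMat, Matrix.mul_apply, Fin.sum_univ_succ] <;> ring

lemma starMat_one (l : k) : starMat l 1 (fun _ => 1) (fun _ => 0) = 1 := by
  ext i j
  fin_cases i <;> fin_cases j <;> simp [starMat]

lemma starMat_scalar (l a : k) :
    starMat l a (fun _ => a) (fun _ => 0) = algebraMap k (Matrix (Fin 6) (Fin 6) k) a := by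
  ext i j
  fin_cases i <;> fin_cases j <;> simp [starMat, Matrix.algebraMap_matrix_apply]

lemma starMat_add (l d d' : k) (e e' c c' : Fin 4 → k) :
    starMat l d e c + starMat l d' e' c' =
      starMat l (d + d') (fun i => e i + e' i) (fun i => c i + c' i) := by
  ext i j
  fin_cases i <;> fin_cases j <;> simp [starMat]
  ring

lemma star_hom (l m : k) (T : Matrix (Fin 6) (Fin 6) k)
    (h : ∀ d e c, T * starMat l d e c = starMat m d e c * T) :
    T = algebraMap k _ (T 0 0) ∧ T 0 0 * l = T 0 0 * m := by
  have E : ∀ d e c i j, (T * starMat l d e c) i j = (starMat m d e c * T) i j := by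
    intro d e c i j; rw [h]
  have hd := fun i j => E 1 0 0 i j
  have he0 := fun i j => E 0 (Pi.single 0 1) 0 i j
  have he1 := fun i j => E 0 (Pi.single 1 1) 0 i j
  have he2 := fun i j => E 0 (Pi.single 2 1) 0 i j
  have he3 := fun i j => E 0 (Pi.single 3 1) 0 i j
  have hc0 := fun i j => E 0 0 (Pi.single 0 1) i j
  have hc1 := fun i j => E 0 0 (Pi.single 1 1) i j
  have hc2 := fun i j => E 0 0 (Pi.single 2 1) i j
  have hc3 := fun i j => E 0 0 (Pi.single 3 1) i j
  clear E h
  simp [starMat, Matrix.mul_apply, Fin.sum_univ_succ, Fin.forall_fin_succ, Pi.single_apply]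
    at hd he0 he1 he2 he3 hc0 hc1 hc2 hc3
  refine ⟨?_, ?_⟩
  · ext i j
    fin_cases i <;> fin_cases j <;> simp [Matrix.algebraMap_matrix_apply] <;> grind
  · grind

end StarPart

section Combine

variable {k : Type} [Field k]

theorem not_finiteRepType_of_star [Infinite k] {A B : Type} [Ring A] [Algebra k A] [Ring B]
    [Algebra k B] [Module.Finite k A]
    (ι : B →ₐ[k] A) (π : A →ₗ[k] B) (h1 : ∀ b a, π (ι b * a) = b * π a)
    (h2 : ∀ b a, π (a * ι b) = π a * b) (h3 : π 1 = 1)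
    (R : k → (B →ₐ[k] Matrix (Fin 6) (Fin 6) k))
    (hR : ∀ l m (T : Matrix (Fin 6) (Fin 6) k), (∀ b, T * R l b = R m b * T) →
      ∃ c : k, T = algebraMap k _ c ∧ c * l = c * m) : ¬ FiniteRepType A := by
  have key : ∀ l m (T : (Fin 6 → k) →ₗ[k] (Fin 6 → k)),
      (∀ b v, T ((R l b).mulVec v) = (R m b).mulVec (T v)) →
      ∃ c : k, (∀ v, T v = c • v) ∧ c * l = c * m := by
    intro l m T hT
    obtain ⟨c, hc, hc'⟩ := hR l m (LinearMap.toMatrix' T) (by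
      intro b
      apply Matrix.toLin'.injective
      ext1 v
      apply LinearMap.ext
      intro w
      simp only [LinearMap.comp_apply, Matrix.toLin'_mul, Matrix.toLin'_toMatrix',
        Matrix.toLin'_apply]
      exact hT b _)
    refine ⟨c, fun v => ?_, hc'⟩
    have : T v = (LinearMap.toMatrix' T).mulVec v := (LinearMap.toMatrix'_mulVec T v).symm
    rw [this, hc, Algebra.algebraMap_eq_smul_one, Matrix.smul_mulVec, Matrix.one_mulVec]
  refine not_finiteRepType_of_family (V := Fin 6 → k) ι π h1 h2 h3 k
    (fun l => (Matrix.toLinAlgEquiv' : Matrix (Fin 6) (Fin 6) k ≃ₐ[k] _).toAlgHom.comp (R l))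
    ?_ ?_
  · intro l T hT
    obtain ⟨c, hc, -⟩ := key l l T (fun b v => hT b v)
    exact ⟨c, hc⟩
  · intro l m hlm T hT v
    obtain ⟨c, hc, hc'⟩ := key l m T (fun b v => hT b v)
    have : c = 0 := by
      by_contra h0
      exact hlm (mul_left_cancel₀ h0 hc')
    rw [hc, this, zero_smul]

variable {P : Type} [Fintype P] [PartialOrder P] [DecidableEq P]

lemma inc_mul_diag (M N : IncidenceAlg k P) (x : P) :
    (M * N : IncidenceAlg k P).1 x x = M.1 x x * N.1 x x := by
  change (M.1 * N.1) x x = _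
  rw [Matrix.mul_apply, Finset.sum_eq_single x]
  · intro z _ hz
    by_cases h : x ≤ z
    · rw [N.2 z x (fun h' => hz (le_antisymm h' h)), mul_zero]
    · rw [M.2 x z h, zero_mul]
  · simp

lemma inc_mul_cov (M N : IncidenceAlg k P) (x y : P) (hxy : x ⋖ y) :
    (M * N : IncidenceAlg k P).1 x y = M.1 x x * N.1 x y + M.1 x y * N.1 y y := by
  change (M.1 * N.1) x y = _
  rw [Matrix.mul_apply, ← Finset.sum_subset (Finset.subset_univ {x, y}),
    Finset.sum_pair hxy.ne]
  intro z _ hz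
  simp only [Finset.mem_insert, Finset.mem_singleton, not_or] at hz
  by_cases h : x ≤ z
  · by_cases h' : z ≤ y
    · exact absurd (hxy.2 (lt_of_le_of_ne h (Ne.symm hz.1)) (lt_of_le_of_ne h' hz.2)) (by simp)
    · rw [N.2 z y h', mul_zero]
  · rw [M.2 x z h, zero_mul]

lemma inc_algebraMap (c : k) (x y : P) :
    (algebraMap k (IncidenceAlg k P) c).1 x y = if x = y then c else 0 :=
  Matrix.algebraMap_matrix_apply

/-- The star representation of the incidence algebra, branches above. -/
def upRep (x : P) (y : Fin 4 → P) (h : ∀ i, x ⋖ y i) (l : k) :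
    IncidenceAlg k P →ₐ[k] Matrix (Fin 6) (Fin 6) k where
  toFun M := starMat l (M.1 x x) (fun i => M.1 (y i) (y i)) (fun i => M.1 x (y i))
  map_one' := by
    rw [← starMat_one l]
    change starMat l ((1 : Matrix P P k) x x) (fun i => (1 : Matrix P P k) (y i) (y i))
      (fun i => (1 : Matrix P P k) x (y i)) = _
    simp [(h _).ne]
  map_mul' M N := by
    simp only [starMat_mul, inc_mul_diag, inc_mul_cov _ _ _ _ (h _)]
  map_zero' := by
    change starMat l 0 (fun _ => 0) (fun _ => 0) = 0
    rw [starMat_scalar, map_zero]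
  map_add' M N := by
    rw [starMat_add]; rfl
  commutes' c := by
    simp only [inc_algebraMap, if_true, if_neg (h _).ne]
    exact starMat_scalar l c

/-- The star representation of the incidence algebra, branches below. -/
def downRep (x : P) (y : Fin 4 → P) (h : ∀ i, y i ⋖ x) (l : k) :
    IncidenceAlg k P →ₐ[k] Matrix (Fin 6) (Fin 6) k where
  toFun M := (starMat l (M.1 x x) (fun i => M.1 (y i) (y i)) (fun i => M.1 (y i) x)).transpose
  map_one' := by
    rw [← Matrix.transpose_one, ← starMat_one l]
    change (starMat l ((1 : Matrix P P k) x x) (fun i => (1 : Matrix P P k) (y i) (y i))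
      (fun i => (1 : Matrix P P k) (y i) x)).transpose = _
    simp [(h _).ne]
  map_mul' M N := by
    rw [← Matrix.transpose_mul]
    simp only [starMat_mul, inc_mul_diag, inc_mul_cov _ _ _ _ (h _)]
    congr 2
    · ring
    · funext i; ring
    · funext i; ring
  map_zero' := by
    change (starMat l 0 (fun _ => 0) (fun _ => 0)).transpose = 0
    rw [starMat_scalar, map_zero, Matrix.transpose_zero]
  map_add' M N := by
    rw [← Matrix.transpose_add, starMat_add]; rfl
  commutes' c := by
    simp only [inc_algebraMap, if_true, if_neg (h _).ne]
    rw [starMat_scalar l c]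
    simp [Algebra.algebraMap_eq_smul_one]

lemma exists_up (x : P) (y : Fin 4 → P) (hy : Function.Injective y) (h : ∀ i, x ⋖ y i)
    (d : k) (e c : Fin 4 → k) : ∃ M : IncidenceAlg k P, M.1 x x = d ∧
      (fun i => M.1 (y i) (y i)) = e ∧ (fun i => M.1 x (y i)) = c := by
  refine ⟨⟨fun a b => if a = b then (if a = x then d else ∑ i, if a = y i then e i else 0)
    else if a = x then ∑ i, if b = y i then c i else 0 else 0, ?_⟩, ?_, ?_, ?_⟩
  · intro a b hab
    have hne : a ≠ b := fun h => hab h.le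
    simp only [if_neg hne]
    split_ifs with hx
    · apply Finset.sum_eq_zero
      intro i _
      rw [if_neg]
      rintro rfl
      exact hab (hx ▸ (h i).le)
    · rfl
  · simp
  · funext i
    simp [(h i).ne', hy.eq_iff]
  · funext i
    simp [(h i).ne, hy.eq_iff]

lemma exists_down (x : P) (y : Fin 4 → P) (hy : Function.Injective y) (h : ∀ i, y i ⋖ x)
    (d : k) (e c : Fin 4 → k) : ∃ M : IncidenceAlg k P, M.1 x x = d ∧
      (fun i => M.1 (y i) (y i)) = e ∧ (fun i => M.1 (y i) x) = c := by
  refine ⟨⟨fun a b => if a = b then (if a = x then d else ∑ i, if a = y i then e i else 0)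
    else if b = x then ∑ i, if a = y i then c i else 0 else 0, ?_⟩, ?_, ?_, ?_⟩
  · intro a b hab
    have hne : a ≠ b := fun h => hab h.le
    simp only [if_neg hne]
    split_ifs with hx
    · apply Finset.sum_eq_zero
      intro i _
      rw [if_neg]
      rintro rfl
      exact hab (hx ▸ (h i).le)
    · rfl
  · simp
  · funext i
    simp [(h i).ne, hy.eq_iff]
  · funext i
    simp [(h i).ne, hy.eq_iff]

lemma upRep_hom (x : P) (y : Fin 4 → P) (hy : Function.Injective y) (h : ∀ i, x ⋖ y i) (l m : k)
    (T : Matrix (Fin 6) (Fin 6) k) (hT : ∀ b, T * upRep x y h l b = upRep x y h m b * T) :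
    ∃ c : k, T = algebraMap k _ c ∧ c * l = c * m := by
  refine ⟨_, star_hom l m T ?_⟩
  intro d e c
  obtain ⟨M, rfl, rfl, rfl⟩ := exists_up x y hy h d e c
  exact hT M

lemma downRep_hom (x : P) (y : Fin 4 → P) (hy : Function.Injective y) (h : ∀ i, y i ⋖ x) (l m : k)
    (T : Matrix (Fin 6) (Fin 6) k) (hT : ∀ b, T * downRep x y h l b = downRep x y h m b * T) :
    ∃ c : k, T = algebraMap k _ c ∧ c * l = c * m := by
  obtain ⟨h1, h2⟩ := star_hom m l T.transpose (by
    intro d e c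
    obtain ⟨M, rfl, rfl, rfl⟩ := exists_down x y hy h d e c
    have := congrArg Matrix.transpose (hT M)
    rw [Matrix.transpose_mul, Matrix.transpose_mul] at this
    exact this.symm)
  refine ⟨_, ?_, h2.symm⟩
  rw [← Matrix.transpose_transpose T, h1]
  simp [Algebra.algebraMap_eq_smul_one]

end Combine

section SkewAlgebra

variable {k : Type} [Field k] {Λ : Type} [Ring Λ] [Algebra k Λ]
variable {G : Type} [Group G] [Fintype G] {σ : G →* (Λ ≃ₐ[k] Λ)}

lemma emb_toFun (a : Λ) (x : G) : (SGA.emb σ a).toFun x = if x = 1 then a else 0 := rfl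

lemma emb_mul_toFun (a : Λ) (f : SGA σ) (x : G) :
    (SGA.emb σ a * f).toFun x = a * f.toFun x := by
  rw [SGA.toFun_mul, Finset.sum_eq_single (1 : G)]
  · simp [emb_toFun]
  · intro b _ hb; simp [emb_toFun, hb]
  · simp

lemma mul_emb_toFun (a : Λ) (f : SGA σ) (x : G) :
    (f * SGA.emb σ a).toFun x = f.toFun x * σ x a := by
  rw [SGA.toFun_mul, Finset.sum_eq_single x]
  · simp [emb_toFun]
  · intro b _ hb
    have : b⁻¹ * x ≠ 1 := by
      intro hc
      rw [inv_mul_eq_one] at hc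
      exact hb hc
    simp [emb_toFun, this]
  · simp

instance sgaAlgebra : Algebra k (SGA σ) :=
  RingHom.toAlgebra' ((SGA.emb σ).comp (algebraMap k Λ)) (by
    intro c f
    ext x
    simp only [RingHom.comp_apply, emb_mul_toFun, mul_emb_toFun, AlgEquiv.commutes]
    exact Algebra.commutes c _)

lemma sga_smul_toFun (c : k) (f : SGA σ) (x : G) : (c • f).toFun x = c • f.toFun x := by
  rw [Algebra.smul_def, Algebra.smul_def]
  exact emb_mul_toFun _ _ _

/-- Linear equivalence with functions. -/
def sgaLin : SGA σ ≃ₗ[k] (G → Λ) where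
  toFun f := f.toFun
  invFun f := ⟨f⟩
  map_add' _ _ := rfl
  map_smul' c f := by funext x; exact sga_smul_toFun c f x
  left_inv _ := rfl
  right_inv _ := rfl

instance [Module.Finite k Λ] : Module.Finite k (SGA σ) :=
  Module.Finite.equiv (sgaLin (σ := σ)).symm

/-- `emb` as an algebra homomorphism. -/
def embAlg : Λ →ₐ[k] SGA σ where
  toRingHom := SGA.emb σ
  commutes' _ := rfl

/-- The bimodule retraction. -/
def sgaProj : SGA σ →ₗ[k] Λ where
  toFun f := f.toFun 1
  map_add' _ _ := rfl
  map_smul' c f := sga_smul_toFun c f 1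

theorem sga_not_finite [Infinite k] [Module.Finite k Λ]
    (R : k → (Λ →ₐ[k] Matrix (Fin 6) (Fin 6) k))
    (hR : ∀ l m (T : Matrix (Fin 6) (Fin 6) k), (∀ b, T * R l b = R m b * T) →
      ∃ c : k, T = algebraMap k _ c ∧ c * l = c * m) : ¬ FiniteRepType (SGA σ) := by
  refine not_finiteRepType_of_star (embAlg (σ := σ)) sgaProj ?_ ?_ ?_ R hR
  · intro b a; exact emb_mul_toFun b a 1
  · intro b a
    change (a * SGA.emb σ b).toFun 1 = a.toFun 1 * b
    rw [mul_emb_toFun, map_one]; rfl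
  · change (1 : SGA σ).toFun 1 = 1
    simp [SGA.toFun_one]

end SkewAlgebra

section Combinatorics

lemma exists_boundary {P : Type} [Fintype P] [PartialOrder P] (hconn : PosetConnected P)
    (F : P → Prop) (x y : P) (hx : F x) (hy : ¬ F y) :
    ∃ a b, F a ∧ ¬ F b ∧ (a ⋖ b ∨ b ⋖ a) := by
  by_contra hcon
  push Not at hcon
  have hup : ∀ a b, F a → a ⋖ b → F b := by
    intro a b ha hab
    by_contra hb
    exact (hcon a b ha hb).1 hab
  have hdn : ∀ a b, F a → b ⋖ a → F b := by
    intro a b ha hab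
    by_contra hb
    exact (hcon a b ha hb).2 hab
  letI : LocallyFiniteOrder P := Fintype.toLocallyFiniteOrder
  have hle : ∀ a b : P, a ≤ b → (F a ↔ F b) := by
    intro a b hab
    rw [le_iff_reflTransGen_covBy] at hab
    induction hab with
    | refl => rfl
    | tail _ h ih => exact ih.trans ⟨fun hf => hup _ _ hf h, fun hf => hdn _ _ hf h⟩
  have : ∀ z, Relation.ReflTransGen (fun a b : P => a ≤ b ∨ b ≤ a) x z → F z := by
    intro z hz
    induction hz with
    | refl => exact hx
    | tail _ h ih =>
      rcases h with h | h
      · exact (hle _ _ h).1 ih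
      · exact (hle _ _ h).2 ih
  exact hy (this y (hconn x y))

lemma exists_star (p : ℕ) [Fact p.Prime] (hp5 : 5 ≤ p)
    (P : Type) [Fintype P] [PartialOrder P]
    (hconn : PosetConnected P)
    (htree : Nat.card {q : P × P // q.1 ⋖ q.2} + 1 = Nat.card P)
    (G : Type) [Group G] [Fintype G] (ρ : G →* (P ≃o P))
    (S : Sylow p G) (hS : ∃ g ∈ (S : Subgroup G), ∃ x : P, ρ g x ≠ x) :
    ∃ (x : P) (y : Fin 4 → P), Function.Injective y ∧ ((∀ i, x ⋖ y i) ∨ (∀ i, y i ⋖ x)) := by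
  letI act : MulAction S P :=
    { smul := fun g x => ρ g.1 x
      one_smul := fun x => by change ρ 1 x = x; rw [map_one]; rfl
      mul_smul := fun g h x => by
        change ρ (g.1 * h.1) x = ρ g.1 (ρ h.1 x); rw [map_mul]; rfl }
  have hsm : ∀ (g : S) (x : P), g • x = ρ g.1 x := fun _ _ => rfl
  letI act2 : MulAction S {q : P × P // q.1 ⋖ q.2} :=
    { smul := fun g q => ⟨(g • q.1.1, g • q.1.2), (apply_covBy_apply_iff (ρ g.1)).2 q.2⟩
      one_smul := fun q => by
        apply Subtype.ext
        exact Prod.ext (one_smul S q.1.1) (one_smul S q.1.2)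
      mul_smul := fun g h q => by
        apply Subtype.ext
        exact Prod.ext (mul_smul g h q.1.1) (mul_smul g h q.1.2) }
  have hpg : IsPGroup p S := S.isPGroup'
  have hV := hpg.card_modEq_card_fixedPoints P
  have hE := hpg.card_modEq_card_fixedPoints {q : P × P // q.1 ⋖ q.2}
  have hne : (MulAction.fixedPoints S P).Nonempty := by
    by_contra hemp
    rw [Set.not_nonempty_iff_eq_empty] at hemp
    have hemp2 : MulAction.fixedPoints S {q : P × P // q.1 ⋖ q.2} = ∅ := by
      rw [Set.eq_empty_iff_forall_notMem] at hemp ⊢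
      intro q hq
      apply hemp q.1.1
      intro g
      exact congrArg (fun r => r.1.1) (hq g)
    rw [hemp] at hV
    rw [hemp2] at hE
    simp only [Nat.card_eq_fintype_card, Fintype.card_ofIsEmpty] at hV hE
    simp only [Nat.card_eq_fintype_card] at htree
    rw [← htree] at hV
    have h1 := (hE.add_right 1).symm.trans hV
    have h1' : 1 ≡ 0 [MOD p] := by simpa using h1
    have h2 : (1 : ℕ) % p = 0 % p := h1'
    rw [Nat.mod_eq_of_lt (by omega), Nat.zero_mod] at h2
    omega
  obtain ⟨x, hx⟩ := hne
  obtain ⟨g, hg, z, hz⟩ := hS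
  obtain ⟨a, b, ha, hb, hab⟩ := exists_boundary hconn
    (fun x => x ∈ MulAction.fixedPoints S P) x z hx (fun h => hz (h ⟨g, hg⟩))
  obtain ⟨n, hn⟩ := hpg.card_orbit b
  have hn0 : n ≠ 0 := by
    rintro rfl
    apply hb
    rw [MulAction.mem_fixedPoints_iff_card_orbit_eq_one, ← Nat.card_eq_fintype_card, hn, pow_zero]
  have hcard : Fintype.card (Fin 4) ≤ Fintype.card (MulAction.orbit S b) := by
    rw [← Nat.card_eq_fintype_card (α := MulAction.orbit S b), hn, Fintype.card_fin]
    have : p ^ 1 ≤ p ^ n := Nat.pow_le_pow_right (by omega) (by omega)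
    rw [pow_one] at this
    omega
  obtain ⟨f⟩ := Function.Embedding.nonempty_of_card_le hcard
  refine ⟨a, fun i => (f i).1, fun i j hij => f.injective (Subtype.ext hij), ?_⟩
  rcases hab with hab | hab
  · left
    intro i
    obtain ⟨h, hh⟩ := (f i).2
    change h • b = _ at hh
    change a ⋖ (f i).1
    rw [← hh, ← ha h]
    exact (apply_covBy_apply_iff (ρ h.1)).2 hab
  · right
    intro i
    obtain ⟨h, hh⟩ := (f i).2
    change h • b = _ at hh
    change (f i).1 ⋖ a
    rw [← hh, ← ha h]
    exact (apply_covBy_apply_iff (ρ h.1)).2 hab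

end Combinatorics

/-- Let `G` be a finite group having a Sylow `p`-subgroup which acts
nontrivially on a connected finite poset `𝒫`, where `p = char k ≥ 5`, and suppose the Hasse
diagram of `𝒫` is a tree. Then the transporter category `𝒯 = G ∝ 𝒫` (whose category algebra
is the skew group algebra `k𝒫G` of the incidence algebra) is of infinite representation
type. -/
theorem transporter_category_directed_tree_infinite_rep_type
    (k : Type) [Field k] [IsAlgClosed k] (p : ℕ) [CharP k p] (hp5 : 5 ≤ p)
    (P : Type) [Fintype P] [PartialOrder P] [DecidableEq P]
    (hconn : PosetConnected P)
    (htree : Nat.card {q : P × P // q.1 ⋖ q.2} + 1 = Nat.card P)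
    (G : Type) [Group G] [Fintype G] (ρ : G →* (P ≃o P))
    (S : Sylow p G) (hS : ∃ g ∈ (S : Subgroup G), ∃ x : P, ρ g x ≠ x) :
    ¬ FiniteRepType (SGA (incRep (k := k) ρ)) := by
  have hprime : Fact p.Prime := ⟨(CharP.char_is_prime_or_zero k p).resolve_right (by omega)⟩
  have hinf : Infinite k := IsAlgClosed.instInfinite
  have hfin : Module.Finite k (IncidenceAlg k P) := inferInstance
  obtain ⟨x, y, hy, h | h⟩ := exists_star p hp5 P hconn htree G ρ S hS
  · exact sga_not_finite (upRep x y h) (upRep_hom x y hy h)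
  · exact sga_not_finite (downRep x y h) (downRep_hom x y hy h)
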